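/- Let A be a pca with an effectively pca-valued partial numbering γ : ω ⇀ A. Given an embedding of pcas f : λη ↪ A or f : λ ↪ A, there exist an element a ∈ A and a total computable function d : ω → ω such that for all n ∈ ω, d(n) ∈ dom(γ), and γ(d(n)) = a if and only if n ∈ K (the halting set). -/

import Mathlib

namespace PCAEmb

/-! ### Oracle computability -/

/-- Codes for partial functions computable relative to an oracle. -/
inductive OCode : Type
  | zero : OCode
  | succ : OCode
  | left : OCode
  | right : OCode
  | oracle : OCode
  | pair : OCode → OCode → OCode
  | comp : OCode → OCode → OCode
  | prec : OCode → OCode → OCode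
  | rfind' : OCode → OCode

/-- Evaluation of an oracle code, relative to a (partial) oracle `O`. -/
def evalo (O : ℕ →. ℕ) : OCode → ℕ →. ℕ
  | .zero => pure 0
  | .succ => Nat.succ
  | .left => ↑fun n : ℕ => n.unpair.1
  | .right => ↑fun n : ℕ => n.unpair.2
  | .oracle => O
  | .pair cf cg => fun n => Nat.pair <$> evalo O cf n <*> evalo O cg n
  | .comp cf cg => fun n => evalo O cg n >>= evalo O cf
  | .prec cf cg =>
      Nat.unpaired fun a n =>
        n.rec (evalo O cf a) fun y IH => do
          let i ← IH
          evalo O cg (Nat.pair a (Nat.pair y i))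
  | .rfind' cf =>
      Nat.unpaired fun a m =>
        (Nat.rfind fun n => (fun x => x = 0) <$> evalo O cf (Nat.pair a (n + m))).map (· + m)

/-- The standard numbering of oracle codes. -/
def OCode.ofNat : ℕ → OCode
  | 0 => .zero
  | 1 => .succ
  | 2 => .left
  | 3 => .right
  | 4 => .oracle
  | n + 5 =>
    match n % 4 with
    | 0 => .pair (OCode.ofNat (n / 4).unpair.1) (OCode.ofNat (n / 4).unpair.2)
    | 1 => .comp (OCode.ofNat (n / 4).unpair.1) (OCode.ofNat (n / 4).unpair.2)
    | 2 => .prec (OCode.ofNat (n / 4).unpair.1) (OCode.ofNat (n / 4).unpair.2)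
    | _ => .rfind' (OCode.ofNat (n / 4).unpair.1)
  decreasing_by
    all_goals
      have h1 := Nat.unpair_left_le (n / 4)
      have h2 := Nat.unpair_right_le (n / 4)
      have h3 := Nat.div_le_self n 4
      omega

/-- The `e`-th Turing functional with oracle `O` : `Φ_e^O`. -/
def phi (O : ℕ →. ℕ) (e : ℕ) : ℕ →. ℕ := evalo O (OCode.ofNat e)

/-- The characteristic function of a set of naturals, as a (total) partial function. -/
noncomputable def chi (X : Set ℕ) : ℕ →. ℕ :=
  fun n => Part.some (X.indicator (fun _ => 1) n)

/-- `ψ` is partial computable relative to the oracle `O`. -/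
def RecursiveIn (O : ℕ →. ℕ) (ψ : ℕ →. ℕ) : Prop := ∃ c : OCode, evalo O c = ψ

/-- Turing reducibility of sets of naturals. -/
def TuringLE (X Y : Set ℕ) : Prop := RecursiveIn (chi Y) (chi X)

/-- A total function `d : ℕ → ℕ` is `Y`-computable. -/
def ComputableIn (Y : Set ℕ) (d : ℕ → ℕ) : Prop :=
  RecursiveIn (chi Y) (fun n => Part.some (d n))

/-- A binary relation on `ℕ` is `Y`-c.e. -/
def CEIn (Y : Set ℕ) (R : ℕ → ℕ → Prop) : Prop :=
  ∃ c : OCode, ∀ n m, R n m ↔ (evalo (chi Y) c (Nat.pair n m)).Dom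

/-- A set `W ⊆ ℕ` is `Y`-c.e. -/
def CE1In (Y : Set ℕ) (W : Set ℕ) : Prop :=
  ∃ c : OCode, ∀ n, n ∈ W ↔ (evalo (chi Y) c n).Dom

/-- The canonical finite set `D_u` with code `u` (binary coding). -/
def Du (u : ℕ) : Set ℕ := {k | u.testBit k}

/-- Enumeration reducibility: `Z ≤ₑ Y`. -/
def EnumLE (Z Y : Set ℕ) : Prop :=
  ∃ W : Set ℕ, CE1In ∅ W ∧ ∀ x, x ∈ Z ↔ ∃ u, Nat.pair x u ∈ W ∧ Du u ⊆ Y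

/-- The Turing jump `X'` of a set `X`. -/
def jump (X : Set ℕ) : Set ℕ := {e | (phi (chi X) e e).Dom}

/-- The halting set `K = {e : φ_e(e)↓}`. -/
def Khalt : Set ℕ := jump ∅

/-! ### Partial combinatory algebras -/

/-- `k·a·b` as a partial element. -/
def app2 {α : Type*} (app : α → α → Part α) (a b c : α) : Part α :=
  (app a b).bind fun x => app x c

/-- `s·a·b·c` as a partial element. -/
def app3 {α : Type*} (app : α → α → Part α) (a b c d : α) : Part α :=
  (app2 app a b c).bind fun x => app x d

/-- A partial applicative structure is a pca if it has (distinct) combinators `s` and `k`. -/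
def IsPCA {α : Type*} (app : α → α → Part α) : Prop :=
  ∃ s k : α, s ≠ k ∧
    (∀ a b : α, app2 app k a b = Part.some a) ∧
    (∀ a b : α, (app2 app s a b).Dom) ∧
    (∀ a b c : α,
      app3 app s a b c = (app a c).bind fun x => (app b c).bind fun y => app x y)

/-- An embedding of partial combinatory algebras: an injection that preserves
(defined) application. -/
def IsPCAEmbedding {α β : Type*} (appA : α → α → Part α) (appB : β → β → Part β)
    (f : α → β) : Prop :=
  Function.Injective f ∧ ∀ a a' c : α, c ∈ appA a a' → f c ∈ appB (f a) (f a')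

/-! ### Partial numberings -/

/-- `γ : ℕ ⇀ α` is a partial numbering (i.e. surjective). -/
def IsNumbering {α : Type*} (γ : ℕ →. α) : Prop := ∀ a : α, ∃ n, a ∈ γ n

/-- `d` is an `(a⊥, a⊤)`-decider for `X` with respect to `γ`. -/
def IsDecider {α : Type*} (γ : ℕ →. α) (abot atop : α) (X : Set ℕ) (d : ℕ → ℕ) : Prop :=
  ∀ n, (n ∉ X → γ (d n) = Part.some abot) ∧ (n ∈ X → γ (d n) = Part.some atop)

/-- `γ` has `Y`-c.e. inequivalence. -/
def CEInequiv {α : Type*} (Y : Set ℕ) (γ : ℕ →. α) : Prop :=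
  ∃ R : ℕ → ℕ → Prop, CEIn Y R ∧
    ∀ n m, (γ n).Dom → (γ m).Dom → (R n m ↔ γ n ≠ γ m)

/-- `γ` is a `Y`-effectively pca-valued partial numbering: the application is
represented on codes by a partial `Y`-computable function `ψ`. -/
def EffValued {α : Type*} (Y : Set ℕ) (app : α → α → Part α) (γ : ℕ →. α) : Prop :=
  ∃ ψ : ℕ →. ℕ, RecursiveIn (chi Y) ψ ∧
    ∀ (n m : ℕ) (a b c : α), a ∈ γ n → b ∈ γ m → c ∈ app a b →
      ∃ j, j ∈ ψ (Nat.pair n m) ∧ c ∈ γ j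

/-- `γ` is a strongly `Y`-effectively pca-valued partial numbering. -/
def StrongEffValued {α : Type*} (Y : Set ℕ) (app : α → α → Part α) (γ : ℕ →. α) : Prop :=
  ∃ ψ : ℕ →. ℕ, RecursiveIn (chi Y) ψ ∧
    (∀ (n m : ℕ) (a b c : α), a ∈ γ n → b ∈ γ m → c ∈ app a b →
      ∃ j, j ∈ ψ (Nat.pair n m) ∧ c ∈ γ j) ∧
    (∀ (n m k l : ℕ) (a b a' b' c : α), a ∈ γ n → b ∈ γ m → a' ∈ γ k → b' ∈ γ l →
      c ∈ app a b → c ∈ app a' b' → ψ (Nat.pair n m) = ψ (Nat.pair k l))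

/-! ### The models -/

/-- Kleene's first model relativized to `X`: application `n · m = Φ_n^X(m)`. -/
noncomputable def k1App (X : Set ℕ) : ℕ → ℕ → Part ℕ := fun n m => phi (chi X) n m

/-- A total function as a partial function. -/
def toPFun (g : ℕ → ℕ) : ℕ →. ℕ := fun n => Part.some (g n)

/-- Join `f ⊕ g` of two partial functions. -/
def pjoin (f g : ℕ →. ℕ) : ℕ →. ℕ := fun n =>
  if n % 2 = 0 then f (n / 2) else g (n / 2)

/-- The totalization of a partial function, as a partial element of `ℕ → ℕ`:
defined iff `ψ` is total. -/
def partToTotal (ψ : ℕ →. ℕ) : Part (ℕ → ℕ) :=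
  ⟨∀ n, (ψ n).Dom, fun H n => (ψ n).get (H n)⟩

/-- Application in Kleene's second model `K₂`: `g · h = Φ^{g⊕h}_{g 0}`,
defined iff this function is total. -/
def k2App (g h : ℕ → ℕ) : Part (ℕ → ℕ) :=
  partToTotal (phi (pjoin (toPFun g) (toPFun h)) (g 0))

/-- Application in van Oosten's sequential model `B`: `θ · ρ = Φ^{θ⊕ρ}_{θ 0}`
(always defined, as a partial function). -/
def bApp (θ ρ : ℕ →. ℕ) : Part (ℕ →. ℕ) :=
  Part.some (fun n => (θ 0).bind fun e => phi (pjoin θ ρ) e n)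

/-- Restriction of a partial applicative structure to a subset. -/
def subApp {α : Type*} (app : α → α → Part α) (P : α → Prop)
    (a b : Subtype P) : Part (Subtype P) :=
  (app a.1 b.1).bind fun c => Part.assert (P c) fun h => Part.some ⟨c, h⟩

/-- Carrier of `K₂^X` : the total `X`-computable functions. -/
def K2el (X : Set ℕ) : Type := {g : ℕ → ℕ // RecursiveIn (chi X) (toPFun g)}

/-- Application in `K₂^X`. -/
def k2XApp (X : Set ℕ) : K2el X → K2el X → Part (K2el X) :=
  subApp k2App _

/-- Carrier of `B^X` : the partial `X`-computable functions. -/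
def Bel (X : Set ℕ) : Type := {θ : ℕ →. ℕ // RecursiveIn (chi X) θ}

/-- Application in `B^X`. -/
def bXApp (X : Set ℕ) : Bel X → Bel X → Part (Bel X) :=
  subApp bApp _

/-- Application in Scott's graph model `G`. -/
def gApp (A B : Set ℕ) : Part (Set ℕ) :=
  Part.some {n | ∃ u, Nat.pair n u ∈ A ∧ Du u ⊆ B}

/-- Carrier of `G^Z` : the sets enumeration-reducible to `Z`. -/
def Gel (Z : Set ℕ) : Type := {A : Set ℕ // EnumLE A Z}

/-- Application in `G^Z`. -/
def gXApp (Z : Set ℕ) : Gel Z → Gel Z → Part (Gel Z) :=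
  subApp gApp _

/-- `X ⊕ X̄ = {2n : n ∈ X} ∪ {2n+1 : n ∉ X}`. -/
def joinCompl (X : Set ℕ) : Set ℕ :=
  {k | ∃ n, (k = 2 * n ∧ n ∈ X) ∨ (k = 2 * n + 1 ∧ n ∉ X)}

/-! ### The λ-calculus -/

/-- Untyped λ-terms (de Bruijn representation). -/
inductive Lam : Type
  | var : ℕ → Lam
  | app : Lam → Lam → Lam
  | abs : Lam → Lam

/-- Lift (shift up) the free variables `≥ d` of a term. -/
def Lam.lift : Lam → ℕ → Lam
  | .var n, d => if n < d then .var n else .var (n + 1)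
  | .app M N, d => .app (M.lift d) (N.lift d)
  | .abs M, d => .abs (M.lift (d + 1))

/-- Substitution `M[k := N]` (de Bruijn). -/
def Lam.subst : Lam → ℕ → Lam → Lam
  | .var n, k, N => if n = k then N else if k < n then .var (n - 1) else .var n
  | .app M M', k, N => .app (M.subst k N) (M'.subst k N)
  | .abs M, k, N => .abs (M.subst (k + 1) (N.lift 0))

/-- β-equivalence of λ-terms. -/
inductive BetaEq : Lam → Lam → Prop
  | beta (M N : Lam) : BetaEq (.app (.abs M) N) (M.subst 0 N)
  | refl (M : Lam) : BetaEq M M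
  | symm {M N : Lam} : BetaEq M N → BetaEq N M
  | trans {M N P : Lam} : BetaEq M N → BetaEq N P → BetaEq M P
  | appCongr {M M' N N' : Lam} :
      BetaEq M M' → BetaEq N N' → BetaEq (.app M N) (.app M' N')
  | absCongr {M M' : Lam} : BetaEq M M' → BetaEq (.abs M) (.abs M')

/-- βη-equivalence of λ-terms. -/
inductive BetaEtaEq : Lam → Lam → Prop
  | beta (M N : Lam) : BetaEtaEq (.app (.abs M) N) (M.subst 0 N)
  | eta (M : Lam) : BetaEtaEq (.abs (.app (M.lift 0) (.var 0))) M
  | refl (M : Lam) : BetaEtaEq M M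
  | symm {M N : Lam} : BetaEtaEq M N → BetaEtaEq N M
  | trans {M N P : Lam} : BetaEtaEq M N → BetaEtaEq N P → BetaEtaEq M P
  | appCongr {M M' N N' : Lam} :
      BetaEtaEq M M' → BetaEtaEq N N' → BetaEtaEq (.app M N) (.app M' N')
  | absCongr {M M' : Lam} : BetaEtaEq M M' → BetaEtaEq (.abs M) (.abs M')

def lamBetaSetoid : Setoid Lam := ⟨BetaEq, ⟨BetaEq.refl, BetaEq.symm, BetaEq.trans⟩⟩

def lamBetaEtaSetoid : Setoid Lam :=
  ⟨BetaEtaEq, ⟨BetaEtaEq.refl, BetaEtaEq.symm, BetaEtaEq.trans⟩⟩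

/-- The pca `λ` of λ-terms modulo β-equivalence. -/
def LamBeta : Type := Quotient lamBetaSetoid

/-- The pca `λη` of λ-terms modulo βη-equivalence. -/
def LamBetaEta : Type := Quotient lamBetaEtaSetoid

/-- Application in `λ` (total). -/
def lamBetaApp : LamBeta → LamBeta → Part LamBeta := fun a b =>
  Part.some (Quotient.map₂ Lam.app (fun _ _ h1 _ _ h2 => BetaEq.appCongr h1 h2) a b)

/-- Application in `λη` (total). -/
def lamBetaEtaApp : LamBetaEta → LamBetaEta → Part LamBetaEta := fun a b =>
  Part.some (Quotient.map₂ Lam.app (fun _ _ h1 _ _ h2 => BetaEtaEq.appCongr h1 h2) a b)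



/-! ### The extensional type model -/

def tmem (i x a : ℕ) : Prop := a.testBit (Nat.pair i x) = true

theorem tmem_lt {i x a : ℕ} (h : tmem i x a) : x < a := by
  have h1 := Nat.ge_two_pow_of_testBit h
  have h2 := Nat.right_le_pair i x
  have h3 : Nat.pair i x < 2 ^ Nat.pair i x := Nat.lt_two_pow_self
  omega

theorem exists_bits (s : Finset ℕ) : ∃ a : ℕ, ∀ k, a.testBit k = true ↔ k ∈ s := by
  classical
  induction s using Finset.induction with
  | empty => exact ⟨0, by simp⟩
  | insert x s hx ih =>
    obtain ⟨a, ha⟩ := ih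
    refine ⟨a ||| 2 ^ x, fun k => ?_⟩
    rw [Nat.testBit_or, Bool.or_eq_true, ha, Nat.testBit_two_pow]
    simp only [decide_eq_true_eq, Finset.mem_insert]
    constructor
    · rintro (h | h)
      · exact Or.inr h
      · exact Or.inl h.symm
    · rintro (h | h)
      · exact Or.inr h.symm
      · exact Or.inl h

theorem tmem_ext {a b : ℕ} (h : ∀ i x, tmem i x a ↔ tmem i x b) : a = b := by
  apply Nat.eq_of_testBit_eq
  intro k
  have := h k.unpair.1 k.unpair.2
  simp only [tmem, Nat.pair_unpair] at this
  exact Bool.eq_iff_iff.mpr this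

theorem exists_tl (a : ℕ) : ∃ b : ℕ, ∀ i x, tmem i x b ↔ tmem (i + 1) x a := by
  classical
  obtain ⟨b, hb⟩ := exists_bits ((Finset.range a).filter
    (fun k => tmem (k.unpair.1 + 1) k.unpair.2 a))
  refine ⟨b, fun i x => ?_⟩
  unfold tmem
  rw [hb]
  simp only [Finset.mem_filter, Finset.mem_range, Nat.unpair_pair]
  constructor
  · exact fun h => h.2
  · intro h
    refine ⟨?_, h⟩
    have h1 := Nat.ge_two_pow_of_testBit h
    have h2 : Nat.pair i x < Nat.pair (i + 1) x := Nat.pair_lt_pair_left _ (by omega)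
    have h3 : Nat.pair (i + 1) x < 2 ^ Nat.pair (i + 1) x := Nat.lt_two_pow_self
    omega

noncomputable def tl (a : ℕ) : ℕ := (exists_tl a).choose

theorem tmem_tl {a i x : ℕ} : tmem i x (tl a) ↔ tmem (i + 1) x a := (exists_tl a).choose_spec i x

def hd (a : ℕ) : Set ℕ := {x | tmem 0 x a}

theorem exists_cons (l : Set ℕ) (hl : l.Finite) (t : ℕ) : ∃ a, hd a = l ∧ tl a = t := by
  classical
  have hfin : ({k | k.unpair.1 = 0 ∧ k.unpair.2 ∈ l} ∪
      {k | ∃ i x, k = Nat.pair (i + 1) x ∧ tmem i x t}).Finite := by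
    apply Set.Finite.union
    · apply (hl.image (fun x => Nat.pair 0 x)).subset
      rintro k ⟨h1, h2⟩
      exact ⟨k.unpair.2, h2, by simp only [← h1, Nat.pair_unpair]⟩
    · apply ((Set.finite_lt_nat t).image
        (fun k => Nat.pair (k.unpair.1 + 1) k.unpair.2)).subset
      rintro k ⟨i, x, rfl, h⟩
      refine ⟨Nat.pair i x, ?_, by simp⟩
      have h1 := Nat.ge_two_pow_of_testBit h
      have h3 : Nat.pair i x < 2 ^ Nat.pair i x := Nat.lt_two_pow_self
      simp only [Set.mem_ofPred_eq]
      omega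
  obtain ⟨a, ha⟩ := exists_bits hfin.toFinset
  have key : ∀ i x, tmem i x a ↔ (i = 0 ∧ x ∈ l) ∨ ∃ j, i = j + 1 ∧ tmem j x t := by
    intro i x
    unfold tmem
    rw [ha, Set.Finite.mem_toFinset]
    simp only [Set.mem_union, Set.mem_ofPred_eq, Nat.unpair_pair, Nat.pair_eq_pair, tmem]
    constructor
    · rintro (h | ⟨j, y, ⟨h1, rfl⟩, h2⟩)
      · exact Or.inl h
      · exact Or.inr ⟨j, h1, h2⟩
    · rintro (h | ⟨j, h1, h2⟩)
      · exact Or.inl h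
      · exact Or.inr ⟨j, x, ⟨h1, rfl⟩, h2⟩
  refine ⟨a, ?_, ?_⟩
  · ext x
    simp [hd, key]
  · apply tmem_ext
    intro i x
    rw [tmem_tl, key]
    simp

theorem hd_finite (a : ℕ) : (hd a).Finite :=
  (Set.finite_lt_nat a).subset (fun _ h => tmem_lt h)

def le (a b : ℕ) : Prop := ∀ i x, (_ : tmem i x a) → ∃ y, ∃ _ : tmem i y b, le y x
termination_by a + b
decreasing_by
  rename_i h1 h2
  have := tmem_lt h1
  have := tmem_lt h2
  omega

theorem le_iff {a b : ℕ} : le a b ↔ ∀ i x, tmem i x a → ∃ y, tmem i y b ∧ le y x := by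
  rw [le]
  simp only [exists_prop]

theorem le_rfl' (a : ℕ) : le a a := by
  induction a using Nat.strong_induction_on with
  | _ a ih =>
    rw [le_iff]
    exact fun i x h => ⟨x, h, ih x (tmem_lt h)⟩

theorem le_tr (n : ℕ) : ∀ a b c : ℕ, a + b + c ≤ n → le a b → le b c → le a c := by
  induction n using Nat.strong_induction_on with
  | _ n ih =>
    intro a b c hn hab hbc
    rw [le_iff] at hab hbc ⊢
    intro i x hx
    obtain ⟨y, hy, hyx⟩ := hab i x hx
    obtain ⟨z, hz, hzy⟩ := hbc i y hy
    have := tmem_lt hx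
    have := tmem_lt hy
    have := tmem_lt hz
    exact ⟨z, hz, ih (z + y + x) (by omega) z y x (by omega) hzy hyx⟩

theorem le_trans' {a b c : ℕ} (h1 : le a b) (h2 : le b c) : le a c :=
  le_tr _ a b c (Nat.le_refl _) h1 h2

/-- upward closure -/
def up (l : Set ℕ) : Set ℕ := {x | ∃ y ∈ l, le y x}

def IsUp (S : Set ℕ) : Prop := ∀ x y, x ∈ S → le x y → y ∈ S

theorem up_isUp (l : Set ℕ) : IsUp (up l) := by
  rintro x y ⟨z, hz, h⟩ h2
  exact ⟨z, hz, le_trans' h h2⟩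

theorem sub_up (l : Set ℕ) : l ⊆ up l := fun x hx => ⟨x, hx, le_rfl' x⟩

theorem up_sub {l S : Set ℕ} (hS : IsUp S) (h : l ⊆ S) : up l ⊆ S := by
  rintro x ⟨y, hy, hyx⟩
  exact hS _ _ (h hy) hyx

theorem up_mono {l m : Set ℕ} (h : l ⊆ m) : up l ⊆ up m :=
  up_sub (up_isUp _) (h.trans (sub_up _))

theorem le_hd_tl {a b : ℕ} : le a b ↔ hd a ⊆ up (hd b) ∧ le (tl a) (tl b) := by
  rw [le_iff, le_iff]
  constructor
  · intro h
    refine ⟨fun x hx => h 0 x hx, fun i x hx => ?_⟩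
    obtain ⟨y, hy, h2⟩ := h (i + 1) x (tmem_tl.1 hx)
    exact ⟨y, tmem_tl.2 hy, h2⟩
  · rintro ⟨h1, h2⟩ i x hx
    cases i with
    | zero => exact h1 hx
    | succ i =>
      obtain ⟨y, hy, h3⟩ := h2 i x (tmem_tl.2 hx)
      exact ⟨y, tmem_tl.1 hy, h3⟩

def dapp (X Y : Set ℕ) : Set ℕ := {t | ∃ s ∈ X, hd s ⊆ Y ∧ le (tl s) t}

theorem dapp_up (X Y : Set ℕ) : IsUp (dapp X Y) := by
  rintro x y ⟨s, hs, h1, h2⟩ h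
  exact ⟨s, hs, h1, le_trans' h2 h⟩

theorem dapp_mono {X X' Y Y' : Set ℕ} (h : X ⊆ X') (h' : Y ⊆ Y') : dapp X Y ⊆ dapp X' Y' := by
  rintro t ⟨s, hs, h1, h2⟩
  exact ⟨s, h hs, h1.trans h', h2⟩

/-- insertion in an environment -/
def ins {β : Type} (k : ℕ) (d : β) (ρ : ℕ → β) : ℕ → β :=
  fun n => if n = k then d else if k < n then ρ (n - 1) else ρ n

def interp : Lam → (ℕ → Set ℕ) → Set ℕ
  | .var n, ρ => ρ n
  | .app M N, ρ => dapp (interp M ρ) (interp N ρ)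
  | .abs M, ρ => {s | tl s ∈ interp M (ins 0 (up (hd s)) ρ)}

theorem ins_mono {k : ℕ} {d d' : Set ℕ} {ρ ρ' : ℕ → Set ℕ} (h : d ⊆ d')
    (h' : ∀ n, ρ n ⊆ ρ' n) : ∀ n, ins k d ρ n ⊆ ins k d' ρ' n := by
  intro n
  unfold ins
  split_ifs
  · exact h
  · exact h' _
  · exact h' _

theorem interp_mono (M : Lam) : ∀ {ρ ρ' : ℕ → Set ℕ}, (∀ n, ρ n ⊆ ρ' n) →
    interp M ρ ⊆ interp M ρ' := by
  induction M with
  | var n => exact fun h => h n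
  | app M N ihM ihN => exact fun h => dapp_mono (ihM h) (ihN h)
  | abs M ih => exact fun h s hs => ih (ins_mono subset_rfl h) hs

theorem ins_up {k : ℕ} {d : Set ℕ} {ρ : ℕ → Set ℕ} (h : IsUp d) (h' : ∀ n, IsUp (ρ n)) :
    ∀ n, IsUp (ins k d ρ n) := by
  intro n
  unfold ins
  split_ifs
  · exact h
  · exact h' _
  · exact h' _

theorem interp_up (M : Lam) : ∀ {ρ : ℕ → Set ℕ}, (∀ n, IsUp (ρ n)) → IsUp (interp M ρ) := by
  induction M with
  | var n => exact fun h => h n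
  | app M N ihM ihN => exact fun h => dapp_up _ _
  | abs M ih =>
    intro ρ h x y hx hxy
    rw [le_hd_tl] at hxy
    have h1 := ih (ins_up (up_isUp _) h) _ _ hx hxy.2
    exact interp_mono M (ins_mono (up_sub (up_isUp _) hxy.1) (fun n => subset_rfl)) h1

theorem interp_cont (M : Lam) : ∀ {ρ : ℕ → Set ℕ}, (∀ n, IsUp (ρ n)) → ∀ t ∈ interp M ρ,
    ∃ l : ℕ → Set ℕ, (∀ n, (l n).Finite ∧ l n ⊆ ρ n) ∧ t ∈ interp M (fun n => up (l n)) := by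
  induction M with
  | var n =>
    intro ρ h t ht
    classical
    refine ⟨fun m => if m = n then {t} else ∅, fun m => ?_, ?_⟩
    · by_cases hm : m = n
      · subst hm
        simpa [interp] using ht
      · simp [hm]
    · simp only [interp, if_true]
      exact sub_up _ rfl
  | app M N ihM ihN =>
    rintro ρ h t ⟨s, hs, h1, h2⟩
    obtain ⟨l0, hl0, hs0⟩ := ihM h s hs
    have hN : ∀ x : hd s, ∃ l : ℕ → Set ℕ, (∀ n, (l n).Finite ∧ l n ⊆ ρ n) ∧
        x.1 ∈ interp N (fun n => up (l n)) := fun x => ihN h x.1 (h1 x.2)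
    choose lx hlx hx using hN
    have : Finite (hd s) := hd_finite s
    refine ⟨fun n => l0 n ∪ ⋃ x, lx x n, fun n => ⟨?_, ?_⟩, s, ?_, ?_, h2⟩
    · exact (hl0 n).1.union (Set.finite_iUnion (fun x => (hlx x n).1))
    · exact Set.union_subset (hl0 n).2 (Set.iUnion_subset (fun x => (hlx x n).2))
    · exact interp_mono M (fun n => up_mono Set.subset_union_left) hs0
    · intro x hxs
      refine interp_mono N (fun n => up_mono ?_) (hx ⟨x, hxs⟩)
      exact (Set.subset_iUnion (fun x => lx x n) ⟨x, hxs⟩).trans Set.subset_union_right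
  | abs M ih =>
    intro ρ h t ht
    obtain ⟨l, hl, h1⟩ := ih (ins_up (up_isUp _) h) _ ht
    refine ⟨fun n => l (n + 1), fun n => ⟨(hl _).1, ?_⟩, ?_⟩
    · have := (hl (n + 1)).2
      simpa [ins] using this
    · refine interp_mono M (fun n => ?_) h1
      cases n with
      | zero =>
        have := (hl 0).2
        simp only [ins, if_true] at this ⊢
        exact up_sub (up_isUp _) this
      | succ n => simp [ins]

theorem ins_ins {β : Type} (k : ℕ) (d e : β) (ρ : ℕ → β) :
    ins 0 e (ins k d ρ) = ins (k + 1) d (ins 0 e ρ) := by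
  funext n
  unfold ins
  rcases n with _ | _ | n
  · simp
  · rcases k with _ | k <;> simp
  · simp only [Nat.add_sub_cancel]
    split_ifs <;> first | rfl | omega | (exfalso; omega)

theorem interp_lift (M : Lam) : ∀ (k : ℕ) (d : Set ℕ) (ρ : ℕ → Set ℕ),
    interp (M.lift k) (ins k d ρ) = interp M ρ := by
  induction M with
  | var n =>
    intro k d ρ
    unfold Lam.lift
    split_ifs with h
    · simp only [interp, ins]
      split_ifs <;> first | rfl | omega
    · simp only [interp, ins]
      split_ifs <;> first | rfl | omega
  | app M N ihM ihN => intro k d ρ; simp only [Lam.lift, interp, ihM, ihN]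
  | abs M ih => intro k d ρ; simp only [Lam.lift, interp, ins_ins, ih]

theorem interp_subst (M : Lam) : ∀ (k : ℕ) (N : Lam) (ρ : ℕ → Set ℕ),
    interp (M.subst k N) ρ = interp M (ins k (interp N ρ) ρ) := by
  induction M with
  | var n =>
    intro k N ρ
    unfold Lam.subst
    simp only [interp, ins]
    split_ifs <;> rfl
  | app M N ihM ihN => intro k N' ρ; simp only [Lam.subst, interp, ihM, ihN]
  | abs M ih => intro k N ρ; simp only [Lam.subst, interp, ins_ins, ih, interp_lift]

theorem interp_beta (M : Lam) {ρ : ℕ → Set ℕ} (h : ∀ n, IsUp (ρ n)) {Y : Set ℕ} (hY : IsUp Y) :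
    dapp (interp (.abs M) ρ) Y = interp M (ins 0 Y ρ) := by
  apply Set.Subset.antisymm
  · rintro t ⟨s, hs, h1, h2⟩
    apply interp_up M (ins_up hY h) _ _ _ h2
    exact interp_mono M (ins_mono (up_sub hY h1) (fun n => subset_rfl)) hs
  · intro t ht
    obtain ⟨l, hl, h1⟩ := interp_cont M (ins_up hY h) t ht
    obtain ⟨s, hs1, hs2⟩ := exists_cons (l 0) (hl 0).1 t
    refine ⟨s, ?_, ?_, ?_⟩
    · simp only [interp, Set.mem_ofPred_eq, hs1, hs2]
      refine interp_mono M (fun n => ?_) h1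
      cases n with
      | zero => simp [ins]
      | succ n =>
        have := (hl (n + 1)).2
        simp only [ins] at this ⊢
        exact up_sub (h _) this
    · rw [hs1]; exact (hl 0).2
    · rw [hs2]; exact le_rfl' t

theorem interp_sound {M N : Lam} (H : BetaEtaEq M N) : ∀ {ρ : ℕ → Set ℕ}, (∀ n, IsUp (ρ n)) →
    interp M ρ = interp N ρ := by
  induction H with
  | beta M N =>
    intro ρ h
    rw [interp_subst]
    exact interp_beta M h (interp_up N h)
  | eta M =>
    intro ρ h
    simp only [interp, interp_lift]
    ext s
    simp only [dapp, ins, if_true, Set.mem_ofPred_eq]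
    constructor
    · rintro ⟨s', h1, h2, h3⟩
      exact interp_up M h _ _ h1 (le_hd_tl.2 ⟨h2, h3⟩)
    · exact fun hs => ⟨s, hs, sub_up _, le_rfl' _⟩
  | refl M => exact fun _ => rfl
  | symm _ ih => exact fun h => (ih h).symm
  | trans _ _ ih1 ih2 => exact fun h => (ih1 h).trans (ih2 h)
  | appCongr _ _ ih1 ih2 => intro ρ h; simp only [interp, ih1 h, ih2 h]
  | absCongr _ ih =>
    intro ρ h
    ext s
    simp only [interp, Set.mem_ofPred_eq, ih (ins_up (up_isUp (hd s)) h)]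

/-- the self-application lemma -/
theorem selfapp {X P : Set ℕ} (hX : IsUp X) (hP : IsUp P)
    (h : ∀ x, IsUp x → dapp x x ⊆ P → dapp X x ⊆ P) : dapp X X ⊆ P := by
  have key : ∀ (m : ℕ) (l : Set ℕ), (∀ x ∈ l, x < m) → l ⊆ X → dapp (up l) (up l) ⊆ P := by
    intro m
    induction m with
    | zero =>
      rintro l hl hlX t ⟨s, ⟨s', hs', _⟩, _⟩
      exact absurd (hl s' hs') (by omega)
    | succ m ih =>
      rintro l hl hlX t ⟨s, ⟨s', hs', hss⟩, h1, h2⟩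
      rw [le_hd_tl] at hss
      have hsub : hd s' ⊆ X :=
        hss.1.trans ((up_sub (up_isUp _) h1).trans (up_sub hX hlX))
      have h3 := ih (hd s') (fun x hx => by
        have := tmem_lt hx
        have := hl s' hs'
        omega) hsub
      have h4 : tl s' ∈ P :=
        h (up (hd s')) (up_isUp _) h3 ⟨s', hlX hs', sub_up _, le_rfl' _⟩
      exact hP _ _ h4 (le_trans' hss.2 h2)
  rintro t ⟨s, hs, h1, h2⟩
  have h3 := key s (hd s) (fun x hx => tmem_lt hx) h1
  exact hP _ _ (h (up (hd s)) (up_isUp _) h3 ⟨s, hs, sub_up _, le_rfl' _⟩) h2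


/-! ### Combinatory algebras and definability of primitive recursive functions -/

class CA (C : Type) where
  ap : C → C → C
  s : C
  k : C
  hk : ∀ a b, ap (ap k a) b = a
  hs : ∀ a b c, ap (ap (ap s a) b) c = ap (ap a c) (ap b c)

local infixl:70 " ⋆ " => CA.ap

inductive CL : Type
  | S : CL
  | K : CL
  | A : CL → CL → CL

def ev (C : Type) [CA C] : CL → C
  | .S => CA.s
  | .K => CA.k
  | .A p q => ev C p ⋆ ev C q

inductive PT : Type
  | c : CL → PT
  | v : ℕ → PT
  | a : PT → PT → PT

def PT.eval {C : Type} [CA C] : PT → (ℕ → C) → C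
  | .c e, _ => ev C e
  | .v n, ρ => ρ n
  | .a p q, ρ => p.eval ρ ⋆ q.eval ρ

def PT.lam : PT → PT
  | .c e => .a (.c .K) (.c e)
  | .v 0 => .c (.A (.A .S .K) .K)
  | .v (n + 1) => .a (.c .K) (.v n)
  | .a p q => .a (.a (.c .S) p.lam) q.lam

def PT.close : PT → CL
  | .c e => e
  | .v _ => .K
  | .a p q => .A p.close q.close

def econs {C : Type} (x : C) (ρ : ℕ → C) : ℕ → C
  | 0 => x
  | n + 1 => ρ n

theorem eval_lam {C : Type} [CA C] (p : PT) (ρ : ℕ → C) (x : C) :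
    p.lam.eval ρ ⋆ x = p.eval (econs x ρ) := by
  induction p with
  | c e => simp [PT.lam, PT.eval, ev, CA.hk]
  | v n => cases n <;> simp [PT.lam, PT.eval, ev, econs, CA.hk, CA.hs]
  | a p q ihp ihq => simp [PT.lam, PT.eval, ev, CA.hs, ihp, ihq]

theorem ev_close {C : Type} [CA C] (p : PT) : ev C p.close = p.eval (fun _ => CA.k) := by
  induction p with
  | c e => rfl
  | v n => rfl
  | a p q ihp ihq => simp [PT.close, PT.eval, ev, ihp, ihq]

local infixl:70 " ● " => PT.a

def cZ : CL := (PT.v 0).lam.lam.close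
def cSu : CL := (PT.v 1 ● (PT.v 2 ● PT.v 1 ● PT.v 0)).lam.lam.lam.close
def cP : CL := (PT.v 0 ● PT.v 2 ● PT.v 1).lam.lam.lam.close
def cF : CL := (PT.v 0 ● PT.c .K).lam.close
def cG : CL := (PT.v 0 ● PT.c cZ).lam.close

section
variable {C : Type} [CA C]

theorem cZ_eq (f x : C) : ev C cZ ⋆ f ⋆ x = x := by
  simp [cZ, ev_close, eval_lam, PT.eval, econs]

theorem cSu_eq (n f x : C) : ev C cSu ⋆ n ⋆ f ⋆ x = f ⋆ (n ⋆ f ⋆ x) := by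
  simp [cSu, ev_close, eval_lam, PT.eval, econs]

theorem cF_eq (x y : C) : ev C cF ⋆ (ev C cP ⋆ x ⋆ y) = x := by
  simp [cF, cP, ev_close, eval_lam, PT.eval, econs, ev, CA.hk]

theorem cG_eq (x y : C) : ev C cG ⋆ (ev C cP ⋆ x ⋆ y) = y := by
  simp [cG, cP, ev_close, eval_lam, PT.eval, econs, cZ_eq]

variable (C) in
def num : ℕ → C
  | 0 => ev C cZ
  | n + 1 => ev C cSu ⋆ num n

theorem num_it (n : ℕ) (f x : C) : num C n ⋆ f ⋆ x = (fun y => f ⋆ y)^[n] x := by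
  induction n with
  | zero => simp [num, cZ_eq]
  | succ n ih => rw [num, cSu_eq, ih, Function.iterate_succ_apply']

variable (C) in
def tup : List ℕ → C
  | [] => CA.k
  | x :: l => ev C cP ⋆ num C x ⋆ tup l

end

def Dfn {n : ℕ} (f : List.Vector ℕ n → ℕ) : Prop :=
  ∃ e : CL, ∀ (C : Type) [CA C] (v : List.Vector ℕ n), ev C e ⋆ tup C v.toList = num C (f v)

theorem tup_vec {C : Type} [CA C] {n : ℕ} (v : List.Vector ℕ (n + 1)) :
    tup C v.toList = ev C cP ⋆ num C v.head ⋆ tup C v.tail.toList := by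
  conv_lhs => rw [← List.Vector.cons_head_tail v]
  rw [List.Vector.toList_cons, tup]

theorem dfn_get {n : ℕ} (i : Fin n) : Dfn (fun v : List.Vector ℕ n => v.get i) := by
  induction n with
  | zero => exact i.elim0
  | succ n ih =>
    refine Fin.cases ?_ (fun j => ?_) i
    · refine ⟨cF, fun C _ v => ?_⟩
      rw [tup_vec, cF_eq]
      simp only [List.Vector.get_zero]
    · obtain ⟨e, he⟩ := ih j
      refine ⟨(PT.c e ● (PT.c cG ● PT.v 0)).lam.close, fun C _ v => ?_⟩
      rw [ev_close, eval_lam]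
      simp only [PT.eval, econs]
      rw [tup_vec, cG_eq, he]
      simp only [List.Vector.get_tail_succ]

theorem dfn_comp_aux {m n : ℕ} (g : Fin n → List.Vector ℕ m → ℕ) (hg : ∀ i, Dfn (g i)) :
    ∃ e : CL, ∀ (C : Type) [CA C] (v : List.Vector ℕ m),
      ev C e ⋆ tup C v.toList = tup C (List.Vector.ofFn fun i => g i v).toList := by
  induction n with
  | zero =>
    refine ⟨.A .K .K, fun C _ v => ?_⟩
    simp [ev, CA.hk, tup, List.Vector.ofFn]
  | succ n ih =>
    obtain ⟨e, he⟩ := ih (fun i => g i.succ) (fun i => hg _)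
    obtain ⟨e0, he0⟩ := hg 0
    refine ⟨(PT.c cP ● (PT.c e0 ● PT.v 0) ● (PT.c e ● PT.v 0)).lam.close, fun C _ v => ?_⟩
    rw [ev_close, eval_lam]
    simp only [PT.eval, econs]
    rw [he0, he, List.Vector.ofFn, List.Vector.toList_cons, tup]

theorem dfn_prim {n : ℕ} {f : List.Vector ℕ n → ℕ} (h : Nat.Primrec' f) : Dfn f := by
  induction h with
  | zero => exact ⟨.A .K cZ, fun C _ v => by rw [ev, ev, CA.hk, num]⟩
  | succ =>
    refine ⟨(PT.c cSu ● (PT.c cF ● PT.v 0)).lam.close, fun C _ v => ?_⟩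
    rw [ev_close, eval_lam]
    simp only [PT.eval, econs]
    rw [tup_vec, cF_eq, num]
  | get i => exact dfn_get i
  | comp g _ _ ihf ihg =>
    obtain ⟨e, he⟩ := ihf
    obtain ⟨e', he'⟩ := dfn_comp_aux g ihg
    refine ⟨(PT.c e ● (PT.c e' ● PT.v 0)).lam.close, fun C _ v => ?_⟩
    rw [ev_close, eval_lam]
    simp only [PT.eval, econs]
    rw [he', he]
  | @prec n f g _ _ ihf ihg =>
    obtain ⟨F, hF⟩ := ihf
    obtain ⟨G, hG⟩ := ihg
    refine ⟨(PT.c cG ● ((PT.c cF ● PT.v 0) ●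
      (PT.c cP ● (PT.c cSu ● (PT.c cF ● PT.v 0)) ●
        (PT.c G ● (PT.c cP ● (PT.c cF ● PT.v 0) ●
          (PT.c cP ● (PT.c cG ● PT.v 0) ● (PT.c cG ● PT.v 1))))).lam ●
      (PT.c cP ● PT.c cZ ● (PT.c F ● (PT.c cG ● PT.v 0))))).lam.close, fun C _ v => ?_⟩
    rw [ev_close, eval_lam]
    simp only [PT.eval]
    simp only [econs]
    rw [tup_vec, cF_eq, cG_eq, hF, num_it]
    have key : ∀ m : ℕ, (fun y => PT.eval (PT.c cP ● (PT.c cSu ● (PT.c cF ● PT.v 0)) ●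
        (PT.c G ● (PT.c cP ● (PT.c cF ● PT.v 0) ●
          (PT.c cP ● (PT.c cG ● PT.v 0) ● (PT.c cG ● PT.v 1))))).lam
          (econs (ev C cP ⋆ num C v.head ⋆ tup C v.tail.toList) fun _ => CA.k) ⋆ y)^[m]
        (ev C cP ⋆ ev C cZ ⋆ num C (f v.tail)) = ev C cP ⋆ num C m ⋆
          num C (Nat.rec (f v.tail) (fun y IH => g (y ::ᵥ IH ::ᵥ v.tail)) m) := by
      intro m
      induction m with
      | zero => rfl
      | succ m ih =>
        rw [Function.iterate_succ_apply', ih, eval_lam]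
        simp only [PT.eval, econs, cF_eq, cG_eq]
        have h2 := hG C (m ::ᵥ (Nat.rec (f v.tail) (fun y IH => g (y ::ᵥ IH ::ᵥ v.tail)) m : ℕ)
          ::ᵥ v.tail)
        rw [List.Vector.toList_cons, List.Vector.toList_cons, tup, tup] at h2
        rw [h2]
        rfl
    rw [key, cG_eq]

/-- The search combinator. -/
theorem exists_search (r : ℕ → ℕ → ℕ) (hr : Primrec₂ r) : ∃ V : CL, ∀ (C : Type) [CA C]
    (n t : ℕ) (x : C), ev C V ⋆ num C n ⋆ x ⋆ num C t =
      num C (r n t) ⋆ (CA.k ⋆ CA.k) ⋆ (x ⋆ x ⋆ num C (t + 1)) := by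
  obtain ⟨e, he⟩ := dfn_prim (Nat.Primrec'.prim_iff₂.2 hr)
  refine ⟨((PT.c e ● (PT.c cP ● PT.v 2 ● (PT.c cP ● PT.v 0 ● PT.c .K))) ● (PT.c (.A .K .K)) ●
    (PT.v 1 ● PT.v 1 ● (PT.c cSu ● PT.v 0))).lam.lam.lam.close, fun C _ n t x => ?_⟩
  rw [ev_close, eval_lam, eval_lam, eval_lam]
  simp only [PT.eval, econs, num]
  have h2 := he C (n ::ᵥ t ::ᵥ List.Vector.nil)
  rw [List.Vector.toList_cons, List.Vector.toList_cons, tup, tup] at h2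
  simp only [List.Vector.toList_nil, tup, List.Vector.head_cons, List.Vector.tail_cons] at h2
  simp only [ev]
  rw [h2]

theorem search_pos {r : ℕ → ℕ → ℕ} {C : Type} [CA C] {V : C} (hV : ∀ (n t : ℕ) (x : C),
    V ⋆ num C n ⋆ x ⋆ num C t =
      num C (r n t) ⋆ (CA.k ⋆ CA.k) ⋆ (x ⋆ x ⋆ num C (t + 1))) (n t : ℕ) (h : r n t ≠ 0) :
    V ⋆ num C n ⋆ (V ⋆ num C n) ⋆ num C 0 = CA.k := by
  have key : ∀ j, j ≤ t → V ⋆ num C n ⋆ (V ⋆ num C n) ⋆ num C (t - j) = CA.k := by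
    have hh : ∀ t, r n t ≠ 0 → V ⋆ num C n ⋆ (V ⋆ num C n) ⋆ num C t = CA.k := by
      intro t h
      rw [hV]
      obtain ⟨m, hm⟩ := Nat.exists_eq_succ_of_ne_zero h
      rw [hm, Nat.succ_eq_add_one, num, cSu_eq, CA.hk]
    intro j
    induction j with
    | zero => exact fun _ => hh t h
    | succ j ih =>
      intro hj
      by_cases h0 : r n (t - (j + 1)) = 0
      · rw [hV, h0, num, cZ_eq, show t - (j + 1) + 1 = t - j by omega]
        exact ih (by omega)
      · exact hh _ h0
  have := key t le_rfl
  rwa [Nat.sub_self] at this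

/-! ### The models as combinatory algebras -/

def DD : Type := {S : Set ℕ // IsUp S}

def lamK : Lam := .abs (.abs (.var 1))
def lamS : Lam := .abs (.abs (.abs (.app (.app (.var 2) (.var 0)) (.app (.var 1) (.var 0)))))

theorem emp_up : IsUp ∅ := fun _ _ h => h.elim

def rho0 : ℕ → Set ℕ := fun _ => ∅

theorem rho0_up : ∀ n, IsUp (rho0 n) := fun _ => emp_up

noncomputable def toDD (M : Lam) : DD := ⟨interp M rho0, interp_up M rho0_up⟩

noncomputable instance : CA DD where
  ap X Y := ⟨dapp X.1 Y.1, dapp_up _ _⟩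
  s := toDD lamS
  k := toDD lamK
  hk a b := by
    apply Subtype.ext
    simp only [toDD, lamK]
    rw [interp_beta _ rho0_up a.2, interp_beta _ (ins_up a.2 rho0_up) b.2]
    simp [interp, ins]
  hs a b c := by
    apply Subtype.ext
    simp only [toDD, lamS]
    rw [interp_beta _ rho0_up a.2, interp_beta _ (ins_up a.2 rho0_up) b.2,
      interp_beta _ (ins_up b.2 (ins_up a.2 rho0_up)) c.2]
    simp [interp, ins]

theorem dd_neg {r : ℕ → ℕ → ℕ} {V : DD} (hV : ∀ (n t : ℕ) (x : DD),
    V ⋆ num DD n ⋆ x ⋆ num DD t =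
      num DD (r n t) ⋆ (CA.k ⋆ CA.k) ⋆ (x ⋆ x ⋆ num DD (t + 1))) (n : ℕ) (h : ∀ t, r n t = 0) :
    V ⋆ num DD n ⋆ (V ⋆ num DD n) ⋆ num DD 0 ≠ CA.k := by
  let P : Set ℕ := {s | ∀ t, ¬ hd s ⊆ (num DD t).1}
  have hP : IsUp P := by
    intro x y hx hxy t hy
    exact hx t ((le_hd_tl.1 hxy).1.trans (up_sub (num DD t).2 hy))
  have hPa : ∀ X ⊆ P, ∀ t, dapp X (num DD t).1 = ∅ := by
    intro X hX t
    ext s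
    simp only [Set.mem_empty_iff_false, iff_false]
    rintro ⟨s', h1, h2, _⟩
    exact hX h1 t h2
  have hsub : dapp (V ⋆ num DD n).1 (V ⋆ num DD n).1 ⊆ P := by
    apply selfapp (V ⋆ num DD n).2 hP
    intro x hx hxx s hs t ht
    have e := hV n t ⟨x, hx⟩
    rw [h t, num, cZ_eq] at e
    have e1 := congrArg Subtype.val e
    have e2 : dapp (dapp (V ⋆ num DD n).1 x) (num DD t).1 = dapp (dapp x x) (num DD (t + 1)).1 := e1
    rw [hPa _ hxx] at e2
    have : tl s ∈ dapp (dapp (V ⋆ num DD n).1 x) (num DD t).1 := ⟨s, hs, ht, le_rfl' _⟩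
    rw [e2] at this
    exact this
  intro e
  have e1 : dapp (dapp (V ⋆ num DD n).1 (V ⋆ num DD n).1) (num DD 0).1 = (CA.k : DD).1 :=
    congrArg Subtype.val e
  rw [hPa _ hsub] at e1
  have hu : IsUp (Set.univ : Set ℕ) := fun _ _ _ _ => trivial
  have e2 := congrArg Subtype.val (CA.hk (C := DD) ⟨Set.univ, hu⟩ ⟨Set.univ, hu⟩)
  have e3 : dapp (dapp (CA.k : DD).1 Set.univ) Set.univ = Set.univ := e2
  rw [← e1] at e3
  have : (0 : ℕ) ∈ dapp (dapp ∅ Set.univ) Set.univ := by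
    rw [e3]
    trivial
  obtain ⟨_, ⟨_, h, _⟩, _⟩ := this
  exact h

theorem lift_lift (M : Lam) : ∀ i k : ℕ, i ≤ k →
    (M.lift i).lift (k + 1) = (M.lift k).lift i := by
  induction M with
  | var n =>
    intro i k h
    simp only [Lam.lift]
    split_ifs <;> simp only [Lam.lift] <;> split_ifs <;> first | rfl | omega
  | app M N ihM ihN => intro i k h; simp only [Lam.lift, ihM i k h, ihN i k h]
  | abs M ih => intro i k h; simp only [Lam.lift, ih (i + 1) (k + 1) (by omega)]

theorem lift_subst (M : Lam) : ∀ (k : ℕ) (N : Lam), (M.lift k).subst k N = M := by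
  induction M with
  | var n =>
    intro k N
    simp only [Lam.lift]
    split_ifs <;> simp only [Lam.subst] <;> split_ifs <;> first | rfl | omega
  | app M N ihM ihN => intro k N; simp only [Lam.lift, Lam.subst, ihM, ihN]
  | abs M ih => intro k N; simp only [Lam.lift, Lam.subst, ih]

theorem lamK_eq (M N : Lam) : BetaEq (.app (.app lamK M) N) M := by
  refine (BetaEq.appCongr (BetaEq.beta _ _) (BetaEq.refl N)).trans ?_
  have := BetaEq.beta (M.lift 0) N
  rw [lift_subst] at this
  simpa [Lam.subst] using this

theorem lamS_eq (M N P : Lam) :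
    BetaEq (.app (.app (.app lamS M) N) P) (.app (.app M P) (.app N P)) := by
  refine (BetaEq.appCongr (BetaEq.appCongr (BetaEq.beta _ _) (BetaEq.refl N))
    (BetaEq.refl P)).trans ?_
  simp only [Lam.subst]
  refine (BetaEq.appCongr (BetaEq.beta _ _) (BetaEq.refl P)).trans ?_
  simp only [Lam.subst]
  refine (BetaEq.beta _ _).trans ?_
  have h1 : ((M.lift 0).lift 0).subst 1 (N.lift 0) = M.lift 0 := by
    rw [← lift_lift M 0 0 le_rfl, lift_subst]
  simp [Lam.subst, h1, lift_subst, BetaEq.refl]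

theorem beta_to_eta {M N : Lam} (h : BetaEq M N) : BetaEtaEq M N := by
  induction h with
  | beta M N => exact .beta M N
  | refl M => exact .refl M
  | symm _ ih => exact .symm ih
  | trans _ _ ih1 ih2 => exact .trans ih1 ih2
  | appCongr _ _ ih1 ih2 => exact .appCongr ih1 ih2
  | absCongr _ ih => exact .absCongr ih

instance : CA LamBeta where
  ap := Quotient.map₂ Lam.app (fun _ _ h1 _ _ h2 => BetaEq.appCongr h1 h2)
  s := Quotient.mk lamBetaSetoid lamS
  k := Quotient.mk lamBetaSetoid lamK
  hk a b := by
    induction a using Quotient.inductionOn with | _ a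
    induction b using Quotient.inductionOn with | _ b
    exact Quotient.sound (lamK_eq a b)
  hs a b c := by
    induction a using Quotient.inductionOn with | _ a
    induction b using Quotient.inductionOn with | _ b
    induction c using Quotient.inductionOn with | _ c
    exact Quotient.sound (lamS_eq a b c)

instance : CA LamBetaEta where
  ap := Quotient.map₂ Lam.app (fun _ _ h1 _ _ h2 => BetaEtaEq.appCongr h1 h2)
  s := Quotient.mk lamBetaEtaSetoid lamS
  k := Quotient.mk lamBetaEtaSetoid lamK
  hk a b := by
    induction a using Quotient.inductionOn with | _ a
    induction b using Quotient.inductionOn with | _ b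
    exact Quotient.sound (beta_to_eta (lamK_eq a b))
  hs a b c := by
    induction a using Quotient.inductionOn with | _ a
    induction b using Quotient.inductionOn with | _ b
    induction c using Quotient.inductionOn with | _ c
    exact Quotient.sound (beta_to_eta (lamS_eq a b c))

structure Hm (C D : Type) [CA C] [CA D] where
  h : C → D
  hap : ∀ x y, h (x ⋆ y) = h x ⋆ h y
  hs : h CA.s = CA.s
  hk : h CA.k = CA.k

theorem Hm.ev {C D : Type} [CA C] [CA D] (F : Hm C D) (e : CL) :
    F.h (PCAEmb.ev C e) = PCAEmb.ev D e := by
  induction e with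
  | S => exact F.hs
  | K => exact F.hk
  | A p q ihp ihq => simp only [PCAEmb.ev, F.hap, ihp, ihq]

theorem Hm.num {C D : Type} [CA C] [CA D] (F : Hm C D) (n : ℕ) :
    F.h (PCAEmb.num C n) = PCAEmb.num D n := by
  induction n with
  | zero => exact F.ev _
  | succ n ih => simp only [PCAEmb.num, F.hap, ih, F.ev]

noncomputable def hmEta : Hm LamBetaEta DD where
  h := Quotient.lift toDD (fun _ _ h => Subtype.ext (interp_sound h rho0_up))
  hap x y := by
    induction x using Quotient.inductionOn with | _ x
    induction y using Quotient.inductionOn with | _ y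
    rfl
  hs := rfl
  hk := rfl

noncomputable def hmBeta : Hm LamBeta DD where
  h := Quotient.lift toDD (fun _ _ h => Subtype.ext (interp_sound (beta_to_eta h) rho0_up))
  hap x y := by
    induction x using Quotient.inductionOn with | _ x
    induction y using Quotient.inductionOn with | _ y
    rfl
  hs := rfl
  hk := rfl


/-! ### Computability -/

open Nat.Partrec (Code)

theorem chi_empty (n : ℕ) : chi ∅ n = Part.some 0 := by simp [chi]

def OCode.tr : OCode → Code
  | .zero => .zero
  | .succ => .succ
  | .left => .left
  | .right => .right
  | .oracle => .zero
  | .pair a b => .pair a.tr b.tr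
  | .comp a b => .comp a.tr b.tr
  | .prec a b => .prec a.tr b.tr
  | .rfind' a => .rfind' a.tr

theorem eval_tr (c : OCode) : c.tr.eval = evalo (chi ∅) c := by
  induction c with
  | oracle => funext n; rw [evalo, chi_empty]; rfl
  | zero => rfl
  | succ => rfl
  | left => rfl
  | right => rfl
  | pair a b iha ihb => simp only [OCode.tr, Code.eval, evalo, iha, ihb]; rfl
  | comp a b iha ihb => simp only [OCode.tr, Code.eval, evalo, iha, ihb]; rfl
  | prec a b iha ihb => simp only [OCode.tr, Code.eval, evalo, iha, ihb]; rfl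
  | rfind' a iha => simp only [OCode.tr, Code.eval, evalo, iha]; rfl

def trStep (l : List Code) : Option Code :=
  if l.length = 0 then some .zero else
  if l.length = 1 then some .succ else
  if l.length = 2 then some .left else
  if l.length = 3 then some .right else
  if l.length = 4 then some .zero else
  (l[((l.length - 5) / 4).unpair.1]?).bind fun x =>
    (l[((l.length - 5) / 4).unpair.2]?).map fun y =>
      if (l.length - 5) % 4 = 0 then .pair x y else
      if (l.length - 5) % 4 = 1 then .comp x y else
      if (l.length - 5) % 4 = 2 then .prec x y else .rfind' x

theorem trStep_prim : Primrec trStep := by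
  have hl : Primrec (fun l : List Code => l.length) := Primrec.list_length
  have heq : ∀ k : ℕ, PrimrecPred (fun l : List Code => l.length = k) := fun k =>
    Primrec.eq.comp hl (Primrec.const k)
  have h5 : Primrec (fun l : List Code => l.length - 5) :=
    Primrec.nat_sub.comp hl (Primrec.const 5)
  have hd4 : Primrec (fun l : List Code => ((l.length - 5) / 4).unpair) :=
    Primrec.unpair.comp (Primrec.nat_div.comp h5 (Primrec.const 4))
  have hm4 : Primrec (fun l : List Code => (l.length - 5) % 4) :=
    Primrec.nat_mod.comp h5 (Primrec.const 4)
  have hmeq : ∀ k : ℕ, PrimrecPred (fun p : (List Code × Code) × Code =>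
      (p.1.1.length - 5) % 4 = k) := fun k =>
    Primrec.eq.comp (hm4.comp (Primrec.fst.comp Primrec.fst)) (Primrec.const k)
  unfold trStep
  refine Primrec.ite (heq 0) (Primrec.const _) ?_
  refine Primrec.ite (heq 1) (Primrec.const _) ?_
  refine Primrec.ite (heq 2) (Primrec.const _) ?_
  refine Primrec.ite (heq 3) (Primrec.const _) ?_
  refine Primrec.ite (heq 4) (Primrec.const _) ?_
  refine Primrec.option_bind (Primrec.list_getElem?.comp Primrec.id (Primrec.fst.comp hd4)) ?_
  refine Primrec.option_map ((Primrec.list_getElem?.comp Primrec.id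
    (Primrec.snd.comp hd4)).comp Primrec.fst) ?_
  have hx : Primrec (fun p : (List Code × Code) × Code => p.1.2) :=
    Primrec.snd.comp Primrec.fst
  have hy : Primrec (fun p : (List Code × Code) × Code => p.2) := Primrec.snd
  refine Primrec.ite (hmeq 0) (Code.primrec₂_pair.comp hx hy) ?_
  refine Primrec.ite (hmeq 1) (Code.primrec₂_comp.comp hx hy) ?_
  exact Primrec.ite (hmeq 2) (Code.primrec₂_prec.comp hx hy) (Code.primrec_rfind'.comp hx)

def trN (n : ℕ) : Code := (OCode.ofNat n).tr

theorem trN_prim : Primrec trN := by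
  have : Primrec₂ (fun (_ : Unit) n => trN n) := by
    refine Primrec.nat_strong_rec _ (g := fun _ l => trStep l) (trStep_prim.comp Primrec.snd) ?_
    intro _ n
    unfold trStep
    rw [List.length_map, List.length_range]
    rcases n with _ | _ | _ | _ | _ | n
    · simp [trN, OCode.ofNat, OCode.tr]
    · simp [trN, OCode.ofNat, OCode.tr]
    · simp [trN, OCode.ofNat, OCode.tr]
    · simp [trN, OCode.ofNat, OCode.tr]
    · simp [trN, OCode.ofNat, OCode.tr]
    · have h1 := Nat.unpair_left_le (n / 4)
      have h2 := Nat.unpair_right_le (n / 4)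
      have h3 := Nat.div_le_self n 4
      rw [if_neg (by omega), if_neg (by omega), if_neg (by omega), if_neg (by omega),
        if_neg (by omega)]
      rw [show n + 1 + 1 + 1 + 1 + 1 - 5 = n by omega]
      rw [List.getElem?_map, List.getElem?_map, List.getElem?_range (by omega),
        List.getElem?_range (by omega)]
      simp only [Option.map_some, Option.bind_some]
      congr 1
      have h4 : n % 4 = 0 ∨ n % 4 = 1 ∨ n % 4 = 2 ∨ n % 4 = 3 := by omega
      conv_rhs => rw [trN, OCode.ofNat]
      rcases h4 with h | h | h | h <;> simp [h, OCode.tr, trN]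
  exact this.comp (Primrec.const ()) Primrec.id

theorem exists_r : ∃ r : ℕ → ℕ → ℕ, Primrec₂ r ∧ ∀ n, n ∈ Khalt ↔ ∃ t, r n t ≠ 0 := by
  refine ⟨fun n t => bif (Code.evaln t (trN n) n).isSome then 1 else 0, ?_, fun n => ?_⟩
  · refine Primrec.cond ?_ (Primrec.const 1) (Primrec.const 0)
    have h1 : Primrec (fun p : ℕ × ℕ => ((p.2, trN p.1), p.1)) :=
      (Primrec.snd.pair (trN_prim.comp Primrec.fst)).pair Primrec.fst
    exact Primrec.option_isSome.comp (Code.primrec_evaln.comp h1)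
  · have h0 : n ∈ Khalt ↔ ((trN n).eval n).Dom := by
      rw [trN, eval_tr]
      rfl
    rw [h0, Part.dom_iff_mem]
    constructor
    · rintro ⟨y, hy⟩
      obtain ⟨t, ht⟩ := Code.evaln_complete.1 hy
      refine ⟨t, ?_⟩
      rw [Option.mem_def] at ht
      simp [ht]
    · rintro ⟨t, ht⟩
      cases he : Code.evaln t (trN n) n with
      | none => simp [he] at ht
      | some y => exact ⟨y, Code.evaln_sound he⟩

def cst : ℕ → OCode
  | 0 => .zero
  | n + 1 => .comp .succ (cst n)

theorem mem_pair {O : ℕ →. ℕ} {a b : OCode} {n x y : ℕ} (hx : x ∈ evalo O a n)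
    (hy : y ∈ evalo O b n) : Nat.pair x y ∈ evalo O (.pair a b) n := by
  have h : evalo O (.pair a b) n = Nat.pair <$> evalo O a n <*> evalo O b n := rfl
  rw [h, Part.eq_some_iff.2 hx, Part.eq_some_iff.2 hy]
  simp [Seq.seq]

theorem mem_comp {O : ℕ →. ℕ} {a b : OCode} {n x y : ℕ} (hx : x ∈ evalo O b n)
    (hy : y ∈ evalo O a x) : y ∈ evalo O (.comp a b) n := by
  exact Part.mem_bind hx hy

theorem mem_cst (O : ℕ →. ℕ) (k n : ℕ) : k ∈ evalo O (cst k) n := by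
  induction k with
  | zero => exact Part.mem_some 0
  | succ k ih => exact mem_comp ih (Part.mem_some (k + 1))

theorem mem_left (O : ℕ →. ℕ) (n : ℕ) : n.unpair.1 ∈ evalo O .left n := Part.mem_some _

theorem mem_right (O : ℕ →. ℕ) (n : ℕ) : n.unpair.2 ∈ evalo O .right n := Part.mem_some _

theorem mem_prec_zero {O : ℕ →. ℕ} {a b : OCode} {p x : ℕ} (hx : x ∈ evalo O a p) :
    x ∈ evalo O (.prec a b) (Nat.pair p 0) := by
  rw [evalo, Nat.unpaired, Nat.unpair_pair]
  exact hx

theorem mem_prec_succ {O : ℕ →. ℕ} {a b : OCode} {p n x y : ℕ}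
    (hx : x ∈ evalo O (.prec a b) (Nat.pair p n))
    (hy : y ∈ evalo O b (Nat.pair p (Nat.pair n x))) :
    y ∈ evalo O (.prec a b) (Nat.pair p (n + 1)) := by
  rw [evalo, Nat.unpaired, Nat.unpair_pair] at hx ⊢
  exact Part.mem_bind hx hy

theorem main_gen {α : Type*} {app : α → α → Part α} {γ : ℕ →. α} (hγ : IsNumbering γ)
    (heff : EffValued ∅ app γ) {L : Type} [CA L] (F : Hm L DD) (f : L → α)
    (hinj : Function.Injective f) (hap : ∀ x y : L, f (x ⋆ y) ∈ app (f x) (f y)) :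
    ∃ (a : α) (d : ℕ → ℕ), ComputableIn ∅ d ∧
      ∀ n, (γ (d n)).Dom ∧ (γ (d n) = Part.some a ↔ n ∈ Khalt) := by
  obtain ⟨ψ, ⟨c, rfl⟩, hψ⟩ := heff
  obtain ⟨r, hr, hrK⟩ := exists_r
  obtain ⟨V, hV⟩ := exists_search r hr
  obtain ⟨v, hv⟩ := hγ (f (ev L V))
  obtain ⟨z, hz⟩ := hγ (f (ev L cZ))
  obtain ⟨s, hs⟩ := hγ (f (ev L cSu))
  have happ : ∀ (a b : OCode) (n : ℕ) (x y : L),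
      (∃ i ∈ evalo (chi ∅) a n, f x ∈ γ i) → (∃ j ∈ evalo (chi ∅) b n, f y ∈ γ j) →
      ∃ k ∈ evalo (chi ∅) (.comp c (.pair a b)) n, f (x ⋆ y) ∈ γ k := by
    rintro a b n x y ⟨i, hi, hi'⟩ ⟨j, hj, hj'⟩
    obtain ⟨k, hk, hk'⟩ := hψ i j _ _ _ hi' hj' (hap x y)
    exact ⟨k, mem_comp (mem_pair hi hj) hk, hk'⟩
  let pm : OCode := .prec (cst z) (.comp c (.pair (cst s) (.comp .right .right)))
  have hpm : ∀ n, ∃ i ∈ evalo (chi ∅) pm (Nat.pair 0 n), f (num L n) ∈ γ i := by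
    intro n
    induction n with
    | zero => exact ⟨z, mem_prec_zero (mem_cst _ _ _), hz⟩
    | succ n ih =>
      obtain ⟨i, hi, hi'⟩ := ih
      obtain ⟨k, hk, hk'⟩ := happ (cst s) (.comp .right .right) (Nat.pair 0 (Nat.pair n i))
        (ev L cSu) (num L n) ⟨s, mem_cst _ _ _, hs⟩ ⟨i, by
          refine mem_comp (mem_right _ _) ?_
          have := mem_right (chi ∅) (Nat.pair n i)
          simpa using this, hi'⟩
      exact ⟨k, mem_prec_succ hi hk, hk'⟩
  let m : OCode := .comp pm (.pair .zero (.pair .left .right))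
  have hm : ∀ n, ∃ i ∈ evalo (chi ∅) m n, f (num L n) ∈ γ i := by
    intro n
    obtain ⟨i, hi, hi'⟩ := hpm n
    refine ⟨i, mem_comp (x := Nat.pair 0 n) (mem_pair (Part.mem_some 0) ?_) hi, hi'⟩
    have := mem_pair (mem_left (chi ∅) n) (mem_right (chi ∅) n)
    rwa [Nat.pair_unpair] at this
  let vn : OCode := .comp c (.pair (cst v) m)
  have hvn : ∀ n, ∃ i ∈ evalo (chi ∅) vn n, f (ev L V ⋆ num L n) ∈ γ i := fun n =>
    happ _ _ n _ _ ⟨v, mem_cst _ _ _, hv⟩ (hm n)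
  have hfin : ∀ n, ∃ i ∈ evalo (chi ∅) (.comp c (.pair (.comp c (.pair vn vn)) (cst z))) n,
      f (ev L V ⋆ num L n ⋆ (ev L V ⋆ num L n) ⋆ num L 0) ∈ γ i := fun n =>
    happ _ _ n _ _ (happ _ _ n _ _ (hvn n) (hvn n)) ⟨z, mem_cst _ _ _, hz⟩
  choose d hd hd' using hfin
  refine ⟨f CA.k, d, ⟨_, funext fun n => Part.eq_some_iff.2 (hd n)⟩, fun n => ?_⟩
  have hg := Part.eq_some_iff.2 (hd' n)
  rw [hg]
  refine ⟨trivial, ?_⟩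
  rw [Part.some_inj, hinj.eq_iff, hrK]
  constructor
  · intro h
    by_contra hcon
    push Not at hcon
    have h2 := congrArg F.h h
    simp only [F.hap, F.ev, F.num, F.hk] at h2
    exact dd_neg (hV DD) n hcon h2
  · rintro ⟨t, ht⟩
    exact search_pos (hV L) n t ht

theorem stmt4 (α : Type*) (app : α → α → Part α) (hpca : IsPCA app)
    (γ : ℕ →. α) (hγ : IsNumbering γ) (heff : EffValued ∅ app γ)
    (hf : (∃ f : LamBetaEta → α, IsPCAEmbedding lamBetaEtaApp app f) ∨
          (∃ f : LamBeta → α, IsPCAEmbedding lamBetaApp app f)) :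
    ∃ (a : α) (d : ℕ → ℕ), ComputableIn ∅ d ∧
      ∀ n, (γ (d n)).Dom ∧ (γ (d n) = Part.some a ↔ n ∈ Khalt) := by

  rcases hf with ⟨f, hinj, hf⟩ | ⟨f, hinj, hf⟩
  · exact main_gen hγ heff hmEta f hinj (fun x y => hf x y _ (Part.mem_some _))
  · exact main_gen hγ heff hmBeta f hinj (fun x y => hf x y _ (Part.mem_some _))

end PCAEmb
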